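/- Let $\sigma_1, \sigma_2 : \mathbb{R}^d \to (0,\infty]$ be lower semicontinuous functions satisfying $\inf_x \min(\sigma_1(x), \sigma_2(x)) > h > 0$ and $\|\sigma_1 - \sigma_2\|_{L^\infty} \le M < \infty$. Then there exists a constant $C = C(d, h, M)$ such that for every $f$ in the screened Sobolev space $\widetilde H^{1/2}_{\sigma_2}(\mathbb{R}^d)$ one has $\|f\|_{\widetilde H^{1/2}_{\sigma_1}} \le C \|f\|_{\widetilde H^{1/2}_{\sigma_2}}$; in particular the two screened spaces coincide. -/

import Mathlib

open MeasureTheory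
open scoped ENNReal

noncomputable section

/-- Squared screened fractional Sobolev seminorm
`‖f‖²_{H̃^{1/2}_Θ} = ∫_{ℝ^d} ∫_{B(0,Θ(x))} |f(x+k)-f(x)|²/|k|^{d+1} dk dx`,
for a screening function `Θ : ℝ^d → (0,∞]`. -/
def screenedSq (d : ℕ) (Θ : EuclideanSpace ℝ (Fin d) → ℝ≥0∞)
    (f : EuclideanSpace ℝ (Fin d) → ℝ) : ℝ≥0∞ :=
  ∫⁻ x, ∫⁻ k in {k : EuclideanSpace ℝ (Fin d) | (‖k‖₊ : ℝ≥0∞) < Θ x},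
    ENNReal.ofReal ((f (x + k) - f x) ^ 2 / ‖k‖ ^ (d + 1))

abbrev ScrE (d : ℕ) := EuclideanSpace ℝ (Fin d)

def scrD {d : ℕ} (f : ScrE d → ℝ) (a b : ScrE d) : ℝ≥0∞ := ENNReal.ofReal ((f b - f a) ^ 2)

def scrQ {d : ℕ} (k : ScrE d) : ℝ≥0∞ := ENNReal.ofReal (1 / ‖k‖ ^ (d + 1))

def scrJ {d : ℕ} (h : ℝ) (u : ScrE d) : ℝ≥0∞ := (Metric.ball (0 : ScrE d) h).indicator 1 u

def scrW {d : ℕ} (σ : ScrE d → ℝ≥0∞) (x : ScrE d) : Set (ScrE d) :=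
  {k | (‖k‖₊ : ℝ≥0∞) < σ x}

lemma scrD_meas {d : ℕ} {f : ScrE d → ℝ} (hf : Measurable f) {α : Type*} [MeasurableSpace α]
    {a b : α → ScrE d} (ha : Measurable a) (hb : Measurable b) :
    Measurable (fun t => scrD f (a t) (b t)) := by
  unfold scrD
  exact (((hf.comp hb).sub (hf.comp ha)).pow_const 2).ennreal_ofReal

lemma scrQ_meas {d : ℕ} : Measurable (scrQ : ScrE d → ℝ≥0∞) := by
  unfold scrQ
  fun_prop

lemma scrJ_meas {d : ℕ} (h : ℝ) : Measurable (scrJ h : ScrE d → ℝ≥0∞) := by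
  have : (scrJ h : ScrE d → ℝ≥0∞) = (Metric.ball (0 : ScrE d) h).indicator 1 := by
    ext u; rfl
  rw [this]
  exact measurable_one.indicator measurableSet_ball

lemma scrW_meas {d : ℕ} (σ : ScrE d → ℝ≥0∞) (x : ScrE d) : MeasurableSet (scrW σ x) :=
  measurableSet_lt (by fun_prop) measurable_const

lemma scrD_tri {d : ℕ} (f : ScrE d → ℝ) (a b c : ScrE d) :
    scrD f a b ≤ 2 * scrD f a c + 2 * scrD f b c := by
  unfold scrD
  rw [show (2 : ℝ≥0∞) = ENNReal.ofReal 2 by simp, ← ENNReal.ofReal_mul (by norm_num),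
    ← ENNReal.ofReal_mul (by norm_num), ← ENNReal.ofReal_add (by positivity) (by positivity)]
  apply ENNReal.ofReal_le_ofReal
  nlinarith [sq_nonneg (f c - f a + (f c - f b))]

lemma screenedSq_eq {d : ℕ} (σ : ScrE d → ℝ≥0∞) (f : ScrE d → ℝ) :
    screenedSq d σ f = ∫⁻ x, ∫⁻ k in scrW σ x, scrQ k * scrD f x (x + k) := by
  unfold screenedSq scrW scrQ scrD
  congr 1; ext x; congr 1; ext k
  rw [← ENNReal.ofReal_mul (by positivity)]
  congr 1; ring

lemma scrJ_int {d : ℕ} (h : ℝ) (k : ScrE d) :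
    ∫⁻ w, scrJ h (w - k) = volume (Metric.ball (0 : ScrE d) h) := by
  rw [lintegral_sub_right_eq_self (fun w => scrJ h w) k]
  unfold scrJ
  rw [lintegral_indicator_one measurableSet_ball]

lemma scrJ_symm {d : ℕ} (h : ℝ) (a b : ScrE d) : scrJ h (a - b) = scrJ h (b - a) := by
  simp [scrJ, Set.indicator, norm_sub_rev a b]

/-- finite tail integral -/
lemma scrQ_tail {d : ℕ} {h : ℝ} (hh : 0 < h) :
    ∫⁻ k in {k : ScrE d | h ≤ ‖k‖}, scrQ k < ⊤ := by
  have key : ∀ k ∈ {k : ScrE d | h ≤ ‖k‖}, scrQ k ≤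
      ENNReal.ofReal (((1 + h) / h) ^ (d + 1)) *
        ENNReal.ofReal ((1 + ‖k‖) ^ (-((d : ℝ) + 1))) := by
    intro k hk
    have hk : h ≤ ‖k‖ := hk
    have hk0 : 0 < ‖k‖ := hh.trans_le hk
    unfold scrQ
    rw [← ENNReal.ofReal_mul (by positivity)]
    apply ENNReal.ofReal_le_ofReal
    rw [Real.rpow_neg (by positivity), show ((d : ℝ) + 1) = ((d + 1 : ℕ) : ℝ) by push_cast; ring,
      Real.rpow_natCast, ← inv_pow, ← mul_pow, one_div, ← inv_pow]
    gcongr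
    rw [← div_eq_mul_inv, inv_eq_one_div, div_div, div_le_div_iff₀ hk0 (by positivity)]
    nlinarith
  calc _ ≤ ∫⁻ k in {k : ScrE d | h ≤ ‖k‖}, ENNReal.ofReal (((1 + h) / h) ^ (d + 1)) *
        ENNReal.ofReal ((1 + ‖k‖) ^ (-((d : ℝ) + 1))) :=
        setLIntegral_mono' (measurableSet_le measurable_const measurable_norm) key
    _ ≤ ∫⁻ k : ScrE d, ENNReal.ofReal (((1 + h) / h) ^ (d + 1)) *
        ENNReal.ofReal ((1 + ‖k‖) ^ (-((d : ℝ) + 1))) := setLIntegral_le_lintegral _ _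
    _ = ENNReal.ofReal (((1 + h) / h) ^ (d + 1)) * ∫⁻ k : ScrE d,
        ENNReal.ofReal ((1 + ‖k‖) ^ (-((d : ℝ) + 1))) := by
        rw [lintegral_const_mul]; fun_prop
    _ < ⊤ := ENNReal.mul_lt_top ENNReal.ofReal_lt_top
        (finite_integral_one_add_norm (by simp))

lemma scr_vol {d : ℕ} {h : ℝ} (hh : 0 < h) (σ : ScrE d → ℝ≥0∞)
    (hσ : ∀ x, ENNReal.ofReal h < σ x) (x k : ScrE d)
    (h1 : σ x ≤ (‖k‖₊ : ℝ≥0∞)) (h2 : (‖k‖₊ : ℝ≥0∞) < σ x + ENNReal.ofReal (h / 4)) :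
    volume (Metric.ball (0 : ScrE d) (h / 8)) ≤ ∫⁻ w in scrW σ x, scrJ h (w - k) := by
  have hfin : σ x ≠ ⊤ := ne_top_of_le_ne_top ENNReal.coe_ne_top h1
  obtain ⟨s, hs⟩ : ∃ s : NNReal, σ x = s := ⟨(σ x).toNNReal, (ENNReal.coe_toNNReal hfin).symm⟩
  have hhs : h < s := by
    have := hσ x
    rw [hs, ← ENNReal.ofReal_coe_nnreal] at this
    exact (ENNReal.ofReal_lt_ofReal_iff_of_nonneg hh.le).1 this
  have h1' : (s : ℝ) ≤ ‖k‖ := by rw [hs] at h1; exact_mod_cast h1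
  have h2' : ‖k‖ < s + h / 4 := by
    rw [hs, ← ENNReal.ofReal_coe_nnreal, ← ENNReal.ofReal_coe_nnreal,
      ← ENNReal.ofReal_add (by positivity) (by positivity)] at h2
    exact (ENNReal.ofReal_lt_ofReal_iff_of_nonneg (by positivity)).1 h2
  have hk0 : 0 < ‖k‖ := by linarith
  set c : ScrE d := (1 - h / 2 / ‖k‖) • k with hc
  have hle : h / 2 / ‖k‖ ≤ 1 := by rw [div_le_one hk0]; linarith
  have hcn : ‖c‖ = ‖k‖ - h / 2 := by
    rw [hc, norm_smul, Real.norm_of_nonneg (by linarith)]; field_simp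
  have hck : ‖c - k‖ = h / 2 := by
    have : c - k = (-(h / 2 / ‖k‖)) • k := by rw [hc]; module
    rw [this, norm_smul, norm_neg, Real.norm_of_nonneg (by positivity)]; field_simp
  have hsub : ∀ w ∈ Metric.ball c (h / 8), w ∈ scrW σ x ∧ scrJ h (w - k) = 1 := by
    intro w hw
    rw [mem_ball_iff_norm] at hw
    constructor
    · have : ‖w‖ < s := by
        have : ‖w‖ ≤ ‖w - c‖ + ‖c‖ := by simpa using norm_add_le (w - c) c
        linarith
      simp only [scrW, Set.mem_ofPred_eq, hs]
      exact_mod_cast this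
    · have : ‖w - k‖ < h := by
        have : ‖w - k‖ ≤ ‖w - c‖ + ‖c - k‖ := norm_sub_le_norm_sub_add_norm_sub w c k
        linarith
      simp [scrJ, Set.indicator, this]
  calc volume (Metric.ball (0 : ScrE d) (h / 8)) = volume (Metric.ball c (h / 8)) := by
        exact (Measure.addHaar_ball_center volume c (h / 8)).symm
    _ = ∫⁻ w in Metric.ball c (h / 8), 1 := by simp
    _ = ∫⁻ w in Metric.ball c (h / 8), scrJ h (w - k) :=
        setLIntegral_congr_fun measurableSet_ball (fun w hw => (hsub w hw).2.symm)
    _ ≤ _ := lintegral_mono_set (fun w hw => (hsub w hw).1)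

/-- first error term -/
lemma scr_I1 {d : ℕ} {h : ℝ} (σ : ScrE d → ℝ≥0∞)
    (f : ScrE d → ℝ) (hf : Measurable f) (x : ScrE d) (T : Set (ScrE d)) (hT : MeasurableSet T)
    (hTσ : ∀ k ∈ T, σ x ≤ (‖k‖₊ : ℝ≥0∞)) :
    ∫⁻ k in T, ∫⁻ w in scrW σ x, scrJ h (w - k) * (scrQ k * scrD f x (x + w)) ≤
      volume (Metric.ball (0 : ScrE d) h) * ∫⁻ w in scrW σ x, scrQ w * scrD f x (x + w) := by
  have hm : Measurable (fun p : ScrE d × ScrE d =>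
      scrJ h (p.2 - p.1) * (scrQ p.1 * scrD f x (x + p.2))) :=
    ((scrJ_meas h).comp (measurable_snd.sub measurable_fst)).mul
      ((scrQ_meas.comp measurable_fst).mul
        (scrD_meas hf measurable_const (measurable_snd.const_add x)))
  rw [lintegral_lintegral_swap hm.aemeasurable]
  rw [← lintegral_const_mul' _ _ measure_ball_lt_top.ne]
  refine setLIntegral_mono' (scrW_meas σ x) (fun w hw => ?_)
  calc _ ≤ ∫⁻ k in T, scrJ h (w - k) * (scrQ w * scrD f x (x + w)) := by
        refine setLIntegral_mono' hT (fun k hk => ?_)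
        by_cases hw0 : w = 0
        · simp [hw0, scrD]
        · gcongr
          unfold scrQ
          apply ENNReal.ofReal_le_ofReal
          have hlt : ‖w‖ < ‖k‖ := by
            have h3 : (‖w‖₊ : ℝ≥0∞) < ‖k‖₊ := lt_of_lt_of_le hw (hTσ k hk)
            exact_mod_cast h3
          have : 0 < ‖w‖ := norm_pos_iff.2 hw0
          gcongr
    _ ≤ ∫⁻ k, scrJ h (w - k) * (scrQ w * scrD f x (x + w)) := setLIntegral_le_lintegral _ _
    _ = ∫⁻ k, scrJ h (k - w) * (scrQ w * scrD f x (x + w)) := by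
        congr 1; ext k; rw [scrJ_symm]
    _ = _ := by
        have m1 : Measurable (fun k : ScrE d => scrJ h (k - w)) :=
          (scrJ_meas h).comp (measurable_id.sub_const w)
        rw [lintegral_mul_const _ m1]
        rw [scrJ_int]

/-- second error term -/
lemma scr_I2 {d : ℕ} {h : ℝ} (hh : 0 < h) (σ : ScrE d → ℝ≥0∞)
    (hσ : ∀ x, ENNReal.ofReal h < σ x)
    (f : ScrE d → ℝ) (hf : Measurable f) :
    ∫⁻ x, ∫⁻ k in {k : ScrE d | h ≤ ‖k‖}, ∫⁻ w,
        scrJ h (w - k) * (scrQ k * scrD f (x + k) (x + w)) ≤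
      (∫⁻ k in {k : ScrE d | h ≤ ‖k‖}, scrQ k) *
        (ENNReal.ofReal (h ^ (d + 1)) * screenedSq d σ f) := by
  have e1 : ∀ x k : ScrE d, ∫⁻ w, scrJ h (w - k) * (scrQ k * scrD f (x + k) (x + w)) =
      scrQ k * ∫⁻ u, scrJ h u * scrD f (x + k) (x + k + u) := by
    intro x k
    rw [← lintegral_add_left_eq_self _ k, ← lintegral_const_mul]
    · congr 1; ext u
      rw [add_sub_cancel_left, add_assoc]; ring
    · exact (scrJ_meas h).mul (scrD_meas hf measurable_const (measurable_id.const_add _))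
  simp_rw [e1]
  set G : ScrE d → ℝ≥0∞ := fun y => ∫⁻ u, scrJ h u * scrD f y (y + u) with hG
  have hGm : Measurable G := by
    apply Measurable.lintegral_prod_right' (f := fun p : ScrE d × ScrE d =>
      scrJ h p.2 * scrD f p.1 (p.1 + p.2))
    exact ((scrJ_meas h).comp measurable_snd).mul
      (scrD_meas hf measurable_fst (measurable_fst.add measurable_snd))
  change ∫⁻ x, ∫⁻ k in {k : ScrE d | h ≤ ‖k‖}, scrQ k * G (x + k) ≤ _
  have hm : Measurable (fun p : ScrE d × ScrE d => scrQ p.2 * G (p.1 + p.2)) :=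
    (scrQ_meas.comp measurable_snd).mul (hGm.comp (measurable_fst.add measurable_snd))
  rw [lintegral_lintegral_swap hm.aemeasurable]
  have e2 : ∀ k : ScrE d, ∫⁻ x, scrQ k * G (x + k) = scrQ k * ∫⁻ y, G y := by
    intro k
    have m1 : Measurable (fun x : ScrE d => G (x + k)) :=
      hGm.comp (measurable_id.add_const k)
    rw [lintegral_const_mul _ m1,
      lintegral_add_right_eq_self G k]
  simp_rw [e2]
  rw [lintegral_mul_const _ scrQ_meas]
  gcongr
  rw [screenedSq_eq, ← lintegral_const_mul' _ _ ENNReal.ofReal_ne_top]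
  refine lintegral_mono (fun y => ?_)
  simp only [hG]
  rw [← lintegral_const_mul' _ _ ENNReal.ofReal_ne_top, ← lintegral_indicator (scrW_meas σ y)]
  refine lintegral_mono (fun u => ?_)
  by_cases hu : ‖u‖ < h
  · have huW : u ∈ scrW σ y := by
      refine lt_trans ?_ (hσ y)
      rw [← ENNReal.ofReal_coe_nnreal]
      exact (ENNReal.ofReal_lt_ofReal_iff hh).2 hu
    rw [Set.indicator_of_mem huW]
    have hJ : scrJ h u = 1 := by simp [scrJ, Set.indicator, hu]
    rw [hJ, one_mul]
    by_cases hu0 : u = 0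
    · simp [hu0, scrD]
    · have : 0 < ‖u‖ := norm_pos_iff.2 hu0
      rw [← mul_assoc, scrQ, ← ENNReal.ofReal_mul (by positivity)]
      refine le_mul_of_one_le_left zero_le ?_
      rw [ENNReal.one_le_ofReal, mul_one_div, one_le_div (by positivity)]
      gcongr
  · have hJ : scrJ h u = 0 := by simp [scrJ, Set.indicator, hu]
    simp [hJ]

def scrC (d : ℕ) (h : ℝ) : ℝ≥0∞ :=
  1 + (volume (Metric.ball (0 : ScrE d) (h / 8)))⁻¹ * (2 * volume (Metric.ball (0 : ScrE d) h) +
    2 * ((∫⁻ k in {k : ScrE d | h ≤ ‖k‖}, scrQ k) * ENNReal.ofReal (h ^ (d + 1))))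

lemma scrC_lt_top {d : ℕ} {h : ℝ} (hh : 0 < h) : scrC d h < ⊤ := by
  have h0 : volume (Metric.ball (0 : ScrE d) (h / 8)) ≠ 0 :=
    (Metric.measure_ball_pos _ _ (by positivity)).ne'
  have h1 : volume (Metric.ball (0 : ScrE d) h) < ⊤ := measure_ball_lt_top
  unfold scrC
  refine ENNReal.add_lt_top.2 ⟨ENNReal.one_lt_top, ENNReal.mul_lt_top ?_ ?_⟩
  · exact ENNReal.inv_lt_top.2 (pos_iff_ne_zero.2 h0)
  · refine ENNReal.add_lt_top.2 ⟨ENNReal.mul_lt_top (by simp) h1, ENNReal.mul_lt_top (by simp) ?_⟩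
    exact ENNReal.mul_lt_top (scrQ_tail hh) ENNReal.ofReal_lt_top

lemma scr_step {d : ℕ} {h : ℝ} (hh : 0 < h) (σ : ScrE d → ℝ≥0∞) (hσm : Measurable σ)
    (hσ : ∀ x, ENNReal.ofReal h < σ x)
    (f : ScrE d → ℝ) (hf : Measurable f) :
    screenedSq d (fun x => σ x + ENNReal.ofReal (h / 4)) f ≤ scrC d h * screenedSq d σ f := by
  set v := volume (Metric.ball (0 : ScrE d) (h / 8)) with hv
  have hv0 : v ≠ 0 := (Metric.measure_ball_pos _ _ (by positivity)).ne'
  have hvt : v ≠ ⊤ := measure_ball_lt_top.ne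
  set B := volume (Metric.ball (0 : ScrE d) h) with hB
  set T : ScrE d → Set (ScrE d) := fun x => {k | σ x ≤ (‖k‖₊ : ℝ≥0∞) ∧
    (‖k‖₊ : ℝ≥0∞) < σ x + ENNReal.ofReal (h / 4)} with hT
  have hTm : ∀ x, MeasurableSet (T x) := fun x =>
    MeasurableSet.inter (s₁ := {k : ScrE d | σ x ≤ (‖k‖₊ : ℝ≥0∞)})
      (s₂ := {k : ScrE d | (‖k‖₊ : ℝ≥0∞) < σ x + ENNReal.ofReal (h / 4)})
      (measurableSet_le measurable_const (by fun_prop))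
      (measurableSet_lt (by fun_prop) measurable_const)
  set A : ScrE d → ℝ≥0∞ := fun x => ∫⁻ k in scrW σ x, scrQ k * scrD f x (x + k) with hA
  set R : ScrE d → ℝ≥0∞ := fun x => ∫⁻ k in {k : ScrE d | h ≤ ‖k‖}, ∫⁻ w,
        scrJ h (w - k) * (scrQ k * scrD f (x + k) (x + w)) with hR
  have hAm : Measurable A := by
    have : A = fun x => ∫⁻ k, {p : ScrE d × ScrE d | (‖p.2‖₊ : ℝ≥0∞) < σ p.1}.indicator
        (fun p => scrQ p.2 * scrD f p.1 (p.1 + p.2)) (x, k) := by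
      ext x
      simp only [hA]
      rw [← lintegral_indicator (scrW_meas σ x)]
      rfl
    rw [this]
    apply Measurable.lintegral_prod_right' (f := {p : ScrE d × ScrE d | (‖p.2‖₊ : ℝ≥0∞) < σ p.1}.indicator
        (fun p => scrQ p.2 * scrD f p.1 (p.1 + p.2)))
    refine Measurable.indicator ?_ (measurableSet_lt (by fun_prop) (hσm.comp measurable_fst))
    exact (scrQ_meas.comp measurable_snd).mul
      (scrD_meas hf measurable_fst (measurable_fst.add measurable_snd))
  -- shell estimate
  have shell : ∀ x, v * ∫⁻ k in T x, scrQ k * scrD f x (x + k) ≤ 2 * (B * A x) + 2 * R x := by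
    intro x
    have pt : ∀ k ∈ T x, v * (scrQ k * scrD f x (x + k)) ≤
        2 * (∫⁻ w in scrW σ x, scrJ h (w - k) * (scrQ k * scrD f x (x + w))) +
        2 * (∫⁻ w, scrJ h (w - k) * (scrQ k * scrD f (x + k) (x + w))) := by
      intro k hk
      have m1 : Measurable (fun w => scrJ h (w - k)) :=
        (scrJ_meas h).comp (measurable_id.sub_const k)
      have m2 : Measurable (fun w => scrJ h (w - k) * (scrQ k * scrD f x (x + w))) :=
        m1.mul (measurable_const.mul (scrD_meas hf measurable_const (measurable_id.const_add x)))
      calc _ ≤ (∫⁻ w in scrW σ x, scrJ h (w - k)) * (scrQ k * scrD f x (x + k)) := by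
            gcongr
            exact scr_vol hh σ hσ x k hk.1 hk.2
        _ = ∫⁻ w in scrW σ x, scrJ h (w - k) * (scrQ k * scrD f x (x + k)) := by
            rw [lintegral_mul_const _ m1]
        _ ≤ ∫⁻ w in scrW σ x, (2 * (scrJ h (w - k) * (scrQ k * scrD f x (x + w))) +
              2 * (scrJ h (w - k) * (scrQ k * scrD f (x + k) (x + w)))) := by
            refine lintegral_mono (fun w => ?_)
            calc _ ≤ scrJ h (w - k) * (scrQ k *
                  (2 * scrD f x (x + w) + 2 * scrD f (x + k) (x + w))) := by
                  gcongr; exact scrD_tri f _ _ _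
              _ = _ := by ring
        _ = 2 * (∫⁻ w in scrW σ x, scrJ h (w - k) * (scrQ k * scrD f x (x + w))) +
            2 * (∫⁻ w in scrW σ x, scrJ h (w - k) * (scrQ k * scrD f (x + k) (x + w))) := by
            rw [lintegral_add_left (m2.const_mul 2), lintegral_const_mul' _ _ (by simp),
              lintegral_const_mul' _ _ (by simp)]
        _ ≤ _ := by
            gcongr
            exact Measure.restrict_le_self
    have hm : Measurable (fun p : ScrE d × ScrE d =>
        scrJ h (p.2 - p.1) * (scrQ p.1 * scrD f x (x + p.2))) :=
      ((scrJ_meas h).comp (measurable_snd.sub measurable_fst)).mul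
        ((scrQ_meas.comp measurable_fst).mul
          (scrD_meas hf measurable_const (measurable_snd.const_add x)))
    have m3 : Measurable (fun k => ∫⁻ w in scrW σ x,
        scrJ h (w - k) * (scrQ k * scrD f x (x + w))) := hm.lintegral_prod_right'
    rw [← lintegral_const_mul' _ _ hvt]
    refine (setLIntegral_mono' (hTm x) pt).trans ?_
    rw [lintegral_add_left (m3.const_mul 2), lintegral_const_mul' _ _ (by simp),
      lintegral_const_mul' _ _ (by simp)]
    gcongr 2 * ?_ + 2 * ?_
    · exact scr_I1 σ f hf x (T x) (hTm x) (fun k hk => hk.1)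
    · refine lintegral_mono_set (fun k hk => ?_)
      have h3 : ENNReal.ofReal h < (‖k‖₊ : ℝ≥0∞) := (hσ x).trans_le hk.1
      rw [← ENNReal.ofReal_coe_nnreal] at h3
      exact ((ENNReal.ofReal_lt_ofReal_iff_of_nonneg hh.le).1 h3).le
  have pt2 : ∀ x, ∫⁻ k in scrW (fun x => σ x + ENNReal.ofReal (h / 4)) x,
      scrQ k * scrD f x (x + k) ≤ A x + v⁻¹ * (2 * (B * A x) + 2 * R x) := by
    intro x
    have hsub : scrW (fun x => σ x + ENNReal.ofReal (h / 4)) x ⊆ scrW σ x ∪ T x := by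
      intro k hk
      by_cases hk2 : (‖k‖₊ : ℝ≥0∞) < σ x
      · exact Or.inl hk2
      · exact Or.inr ⟨not_lt.1 hk2, hk⟩
    refine (lintegral_mono_set hsub).trans ((lintegral_union_le _ _ _).trans ?_)
    gcongr
    rw [← ENNReal.div_eq_inv_mul, ENNReal.le_div_iff_mul_le (Or.inl hv0) (Or.inl hvt), mul_comm]
    exact shell x
  have hvi : v⁻¹ ≠ ⊤ := ENNReal.inv_ne_top.2 hv0
  have hS : ∫⁻ x, A x = screenedSq d σ f := (screenedSq_eq σ f).symm
  have hRS := scr_I2 hh σ hσ f hf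
  rw [screenedSq_eq]
  calc _ ≤ ∫⁻ x, (A x + v⁻¹ * (2 * (B * A x) + 2 * R x)) := lintegral_mono pt2
    _ = (∫⁻ x, A x) + v⁻¹ * (2 * (B * ∫⁻ x, A x) + 2 * ∫⁻ x, R x) := by
        rw [lintegral_add_left hAm, lintegral_const_mul' _ _ hvi,
          lintegral_add_left ((hAm.const_mul B).const_mul 2),
          lintegral_const_mul' 2 _ (by simp), lintegral_const_mul _ hAm,
          lintegral_const_mul' 2 _ (by simp)]
    _ ≤ screenedSq d σ f + v⁻¹ * (2 * (B * screenedSq d σ f) + 2 *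
        ((∫⁻ k in {k : ScrE d | h ≤ ‖k‖}, scrQ k) *
        (ENNReal.ofReal (h ^ (d + 1)) * screenedSq d σ f))) := by
        rw [hS]
        gcongr
    _ = _ := by
        rw [scrC]; ring

lemma scr_iter {d : ℕ} {h : ℝ} (hh : 0 < h) (σ : ScrE d → ℝ≥0∞) (hσm : Measurable σ)
    (hσ : ∀ x, ENNReal.ofReal h < σ x)
    (f : ScrE d → ℝ) (hf : Measurable f) (n : ℕ) :
    screenedSq d (fun x => σ x + n * ENNReal.ofReal (h / 4)) f ≤
      scrC d h ^ n * screenedSq d σ f := by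
  induction n with
  | zero => simp
  | succ n ih =>
    have := scr_step hh (fun x => σ x + n * ENNReal.ofReal (h / 4)) (hσm.add_const _)
      (fun x => (hσ x).trans_le le_self_add) f hf
    have e : (fun x => σ x + ((n + 1 : ℕ) : ℝ≥0∞) * ENNReal.ofReal (h / 4)) =
        fun x => σ x + n * ENNReal.ofReal (h / 4) + ENNReal.ofReal (h / 4) := by
      ext x; push_cast; ring
    rw [e]
    calc _ ≤ _ := this
      _ ≤ scrC d h * (scrC d h ^ n * screenedSq d σ f) := by gcongr
      _ = _ := by ring

lemma scr_mono {d : ℕ} (σ τ : ScrE d → ℝ≥0∞) (hστ : ∀ x, σ x ≤ τ x) (f : ScrE d → ℝ) :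
    screenedSq d σ f ≤ screenedSq d τ f := by
  rw [screenedSq_eq, screenedSq_eq]
  exact lintegral_mono (fun x => lintegral_mono_set (fun k hk => lt_of_lt_of_le hk (hστ x)))

/-- comparison of screened Sobolev spaces.  If `σ₁, σ₂ : ℝ^d → (0,∞]`
are lower semicontinuous, bounded below by `h > 0`, and satisfy
`‖σ₁ - σ₂‖_{L^∞} ≤ M < ∞`, then there is `C = C(d,h,M)` with
`‖f‖_{H̃^{1/2}_{σ₁}} ≤ C ‖f‖_{H̃^{1/2}_{σ₂}}` for all `f ∈ H̃^{1/2}_{σ₂}(ℝ^d)`;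
in particular the two screened spaces coincide. -/
theorem stmt_1 (d : ℕ) (h M : ℝ) (hh : 0 < h) (hM : 0 ≤ M) :
    ∃ C : ℝ, 0 < C ∧
      ∀ (σ₁ σ₂ : EuclideanSpace ℝ (Fin d) → ℝ≥0∞),
        LowerSemicontinuous σ₁ → LowerSemicontinuous σ₂ →
        (∀ x, ENNReal.ofReal h < σ₁ x) → (∀ x, ENNReal.ofReal h < σ₂ x) →
        (∀ x, σ₁ x ≤ σ₂ x + ENNReal.ofReal M ∧ σ₂ x ≤ σ₁ x + ENNReal.ofReal M) →
        ∀ (f : EuclideanSpace ℝ (Fin d) → ℝ), Measurable f →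
          screenedSq d σ₂ f < ⊤ →
          screenedSq d σ₁ f ≤ ENNReal.ofReal (C ^ 2) * screenedSq d σ₂ f ∧
          screenedSq d σ₁ f < ⊤ := by
  obtain ⟨n, hn⟩ := exists_nat_ge (M / (h / 4))
  have hnM : ENNReal.ofReal M ≤ n * ENNReal.ofReal (h / 4) := by
    rw [← ENNReal.ofReal_natCast, ← ENNReal.ofReal_mul (by positivity)]
    apply ENNReal.ofReal_le_ofReal
    rwa [div_le_iff₀ (by positivity)] at hn
  have hK : scrC d h ^ n < ⊤ := ENNReal.pow_lt_top (scrC_lt_top hh)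
  have hK' : scrC d h ^ n ≤ ENNReal.ofReal (((scrC d h ^ n).toReal + 1) ^ 2) := by
    rw [← ENNReal.ofReal_toReal hK.ne]
    apply ENNReal.ofReal_le_ofReal
    rw [ENNReal.ofReal_toReal hK.ne]
    nlinarith [ENNReal.toReal_nonneg (a := scrC d h ^ n)]
  refine ⟨(scrC d h ^ n).toReal + 1, by positivity, ?_⟩
  intro σ₁ σ₂ _ hl₂ _ hb₂ hσ f hf hfin
  have key : screenedSq d σ₁ f ≤
      ENNReal.ofReal (((scrC d h ^ n).toReal + 1) ^ 2) * screenedSq d σ₂ f := by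
    refine (scr_mono σ₁ (fun x => σ₂ x + n * ENNReal.ofReal (h / 4)) (fun x => ?_) f).trans ?_
    · exact (hσ x).1.trans (by gcongr)
    · refine (scr_iter hh σ₂ hl₂.measurable hb₂ f hf n).trans ?_
      gcongr
  exact ⟨key, key.trans_lt (ENNReal.mul_lt_top ENNReal.ofReal_lt_top hfin)⟩


end
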